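/- arXiv:1812.09753 — 2 statements merged into one kernel-verified Lean document; each statement's English description precedes it below -/
import Mathlib

section
/- Let n ≥ 2 and let X ⊆ S^n be a nonempty compact set with geodesic diameter diam X ≤ π/2. Let Y = {x/‖x‖ : x ∈ conv(X), x ≠ 0} ⊆ S^n, where conv(X) denotes the convex hull of X in ℝ^{n+1} (Y is the spherical convex hull of X). Then diam Y = diam X. -/
/-!
A bound `θ` on the angle between nonzero `x` and `y` is the inequality
`cos θ * (‖x‖ * ‖y‖) ≤ ⟪x, y⟫`. When `θ ≤ π / 2` the factor `cos θ` is nonnegative, so for fixed `x`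
the difference of the two sides is convex in `y` and the solutions form a convex cone. Applying this
in each variable in turn, the inequality passes from a set to its convex hull. It is homogeneous in
`x` and `y`, so it survives the projection to the sphere.
-/

open MeasureTheory

noncomputable section

/-- Euclidean space `ℝ^{n+1}`. -/
abbrev Esp (n : ℕ) : Type := EuclideanSpace ℝ (Fin (n + 1))

/-- The unit sphere `S^n ⊆ ℝ^{n+1}`, as a subtype. -/
abbrev Sph (n : ℕ) : Type := Metric.sphere (0 : Esp n) 1

/-- Geodesic distance `d(x,y) = arccos ⟨x,y⟩` on the sphere. -/
def gd {n : ℕ} (x y : Sph n) : ℝ :=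
  Real.arccos (inner (𝕜 := ℝ) (x : Esp n) (y : Esp n))

/-- Closed geodesic ball `B(z,r) = {x ∈ Sⁿ : d(x,z) ≤ r}`. -/
def sphBall {n : ℕ} (z : Sph n) (r : ℝ) : Set (Sph n) := {x | gd x z ≤ r}

/-- Geodesic diameter `diam X = sup {d(x,y) : x, y ∈ X}`. -/
def sphDiam {n : ℕ} (X : Set (Sph n)) : ℝ :=
  sSup {r | ∃ x ∈ X, ∃ y ∈ X, r = gd x y}

/-- Spherical volume: the `n`-dimensional (Hausdorff) surface measure on `S^n`. -/
def sphVol (n : ℕ) : Measure (Sph n) := μH[(n : ℝ)]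

open InnerProductGeometry
open scoped Real RealInnerProductSpace

section AngularDiameter

variable {E : Type*} [NormedAddCommGroup E] [InnerProductSpace ℝ E] {s t : Set E} {c θ : ℝ}

lemma cos_mul_norm_mul_norm_le_inner_of_angle_le {x y : E} (hθ : θ ≤ π) (h : angle x y ≤ θ) :
    Real.cos θ * (‖x‖ * ‖y‖) ≤ ⟪x, y⟫ := by
  rw [← cos_angle_mul_norm_mul_norm x y]
  gcongr
  exact Real.cos_le_cos_of_nonneg_of_le_pi (angle_nonneg x y) hθ h

lemma angle_le_of_cos_mul_norm_mul_norm_le_inner {x y : E} (hx : x ≠ 0) (hy : y ≠ 0)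
    (hθ₀ : 0 ≤ θ) (hθπ : θ ≤ π) (h : Real.cos θ * (‖x‖ * ‖y‖) ≤ ⟪x, y⟫) : angle x y ≤ θ := by
  rwa [← cos_angle_mul_norm_mul_norm x y, mul_le_mul_iff_left₀ (by positivity),
    Real.strictAntiOn_cos.le_iff_ge ⟨hθ₀, hθπ⟩ ⟨angle_nonneg x y, angle_le_pi x y⟩] at h

lemma convex_setOf_mul_norm_mul_norm_le_inner (hc : 0 ≤ c) (x : E) :
    Convex ℝ {y : E | c * (‖x‖ * ‖y‖) ≤ ⟪x, y⟫} := by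
  have hnorm : ConvexOn ℝ Set.univ fun y : E => c * ‖x‖ * ‖y‖ :=
    (convexOn_norm convex_univ).smul (by positivity)
  have hinner : ConcaveOn ℝ Set.univ fun y : E => ⟪x, y⟫ :=
    (innerₛₗ ℝ x).concaveOn convex_univ
  simpa [mul_assoc] using (hnorm.sub hinner).convex_le 0

lemma mul_norm_mul_norm_le_inner_of_mem_convexHull (hc : 0 ≤ c)
    (h : ∀ x ∈ s, ∀ y ∈ s, c * (‖x‖ * ‖y‖) ≤ ⟪x, y⟫) {p q : E}
    (hp : p ∈ convexHull ℝ s) (hq : q ∈ convexHull ℝ s) : c * (‖p‖ * ‖q‖) ≤ ⟪p, q⟫ := by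
  have hsq : ∀ x ∈ s, c * (‖x‖ * ‖q‖) ≤ ⟪x, q⟫ := fun x hx =>
    convexHull_min (h x hx) (convex_setOf_mul_norm_mul_norm_le_inner hc x) hq
  have hqs : ∀ x ∈ s, c * (‖q‖ * ‖x‖) ≤ ⟪q, x⟫ := fun x hx => by
    rw [mul_comm ‖q‖, real_inner_comm]
    exact hsq x hx
  rw [mul_comm ‖p‖, real_inner_comm]
  exact convexHull_min hqs (convex_setOf_mul_norm_mul_norm_le_inner hc q) hp

lemma angle_le_of_mem_convexHull (hθ : θ ≤ π / 2) (h : ∀ x ∈ s, ∀ y ∈ s, angle x y ≤ θ)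
    {p q : E} (hp : p ∈ convexHull ℝ s) (hq : q ∈ convexHull ℝ s) (hp₀ : p ≠ 0)
    (hq₀ : q ≠ 0) : angle p q ≤ θ := by
  obtain ⟨z, hz⟩ : s.Nonempty := convexHull_nonempty_iff.1 ⟨p, hp⟩
  have hθ₀ : 0 ≤ θ := (angle_nonneg z z).trans (h z hz z hz)
  have hθπ : θ ≤ π := hθ.trans (half_le_self Real.pi_nonneg)
  have hcos : 0 ≤ Real.cos θ :=
    Real.cos_nonneg_of_neg_pi_div_two_le_of_le (by linarith [Real.pi_pos]) hθ
  have hpq : Real.cos θ * (‖p‖ * ‖q‖) ≤ ⟪p, q⟫ :=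
    mul_norm_mul_norm_le_inner_of_mem_convexHull hcos
      (fun x hx y hy => cos_mul_norm_mul_norm_le_inner_of_angle_le hθπ (h x hx y hy)) hp hq
  exact angle_le_of_cos_mul_norm_mul_norm_le_inner hp₀ hq₀ hθ₀ hθπ hpq

/-- The supremum of the angles between two vectors of `s`. For a set of unit vectors this is its
geodesic diameter. Mathlib's convention `angle 0 x = π / 2` applies if `0 ∈ s`, and the value is `0`
for `s = ∅`. -/
def angularDiam (s : Set E) : ℝ :=
  sSup (Set.image2 angle s s)

/-- The spherical convex hull: the radial projection to the unit sphere of the nonzero points of the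
convex hull. -/
def sphericalConvexHull (s : Set E) : Set E :=
  NormedSpace.normalize '' (convexHull ℝ s \ {0})

lemma angle_le_angularDiam {x y : E} (hx : x ∈ s) (hy : y ∈ s) : angle x y ≤ angularDiam s :=
  le_csSup ⟨π, Set.forall_mem_image2.2 fun x _ y _ => angle_le_pi x y⟩ (Set.mem_image2_of_mem hx hy)

lemma angularDiam_le (hs : s.Nonempty) (h : ∀ x ∈ s, ∀ y ∈ s, angle x y ≤ θ) : angularDiam s ≤ θ :=
  csSup_le (hs.image2 hs) (Set.forall_mem_image2.2 h)

lemma angularDiam_mono (hs : s.Nonempty) (hst : s ⊆ t) : angularDiam s ≤ angularDiam t :=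
  angularDiam_le hs fun _ hx _ hy => angle_le_angularDiam (hst hx) (hst hy)

lemma angularDiam_image_normalize (s : Set E) :
    angularDiam (NormedSpace.normalize '' s) = angularDiam s := by
  simp only [angularDiam, Set.image2_image_left, Set.image2_image_right, angle_normalize_left,
    angle_normalize_right]

theorem sphDiam_sphericalConvexHull_general (hne : s.Nonempty) (h₀ : 0 ∉ s)
    (hdiam : angularDiam s ≤ π / 2) : angularDiam (sphericalConvexHull s) = angularDiam s := by
  have hsub : s ⊆ convexHull ℝ s \ {0} :=
    Set.subset_sdiff_singleton (subset_convexHull ℝ s) h₀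
  rw [sphericalConvexHull, angularDiam_image_normalize]
  refine le_antisymm (angularDiam_le (hne.mono hsub) ?_) (angularDiam_mono hne hsub)
  rintro p ⟨hp, hp₀⟩ q ⟨hq, hq₀⟩
  exact angle_le_of_mem_convexHull hdiam (fun x hx y hy => angle_le_angularDiam hx hy) hp hq
    hp₀ hq₀

lemma coe_image_setOf_eq_sphericalConvexHull (s : Set E) :
    ((↑) '' {y : Metric.sphere (0 : E) 1 | ∃ x ∈ convexHull ℝ s, x ≠ 0 ∧ (y : E) = ‖x‖⁻¹ • x} :
      Set E) = sphericalConvexHull s := by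
  ext z
  constructor
  · rintro ⟨y, ⟨x, hx, hx₀, hy⟩, rfl⟩
    exact ⟨x, ⟨hx, hx₀⟩, hy.symm⟩
  · rintro ⟨x, ⟨hx, hx₀⟩, rfl⟩
    exact ⟨⟨NormedSpace.normalize x, by simpa using hx₀⟩, ⟨x, hx, hx₀, rfl⟩, rfl⟩

end AngularDiameter

lemma gd_eq_angle {n : ℕ} (x y : Sph n) : gd x y = angle (x : Esp n) y := by
  simp [gd, angle]

lemma sphDiam_eq_angularDiam {n : ℕ} (X : Set (Sph n)) :
    sphDiam X = angularDiam ((↑) '' X : Set (Esp n)) := by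
  have hgd : gd = fun x y : Sph n => angle (x : Esp n) y := funext₂ gd_eq_angle
  have himage : {r | ∃ x ∈ X, ∃ y ∈ X, r = gd x y} = Set.image2 gd X X := by
    simp only [Set.image2, eq_comm]
  rw [sphDiam, himage, hgd, angularDiam, Set.image2_image_left, Set.image2_image_right]

/-- the spherical convex hull of a nonempty compact set of geodesic
diameter at most `π/2` has the same geodesic diameter. -/
theorem sphDiam_sphericalConvexHull (n : ℕ) (hn : 2 ≤ n) (X : Set (Sph n))
    (hne : X.Nonempty) (hcomp : IsCompact X) (hdiam : sphDiam X ≤ Real.pi / 2) :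
    sphDiam {y : Sph n | ∃ x ∈ convexHull ℝ (((↑) '' X : Set (Esp n))),
        x ≠ 0 ∧ (y : Esp n) = ‖x‖⁻¹ • x} = sphDiam X := by
  rw [sphDiam_eq_angularDiam] at hdiam
  rw [sphDiam_eq_angularDiam, sphDiam_eq_angularDiam, coe_image_setOf_eq_sphericalConvexHull]
  exact sphDiam_sphericalConvexHull_general (hne.image _) (by simp) hdiam
end
end

section
/- Let n ≥ 2 and 0 < D ≤ π/2. Then every D-maximal set C ⊆ S^n is spherically convex. -/
/-!
Let `P` be the closed convex cone generated by a `D`-maximal set `C`. For `D ≤ π/2` the vectors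
at angle at most `D` from a given one form a closed convex cone, so the angle bound on `C` extends
to `P`, first in one argument and then in the other. The trace `T` of `P` on the sphere is
therefore an admissible competitor containing `C`, and `T \ C` is a null set by maximality. As `C`
has positive measure it lies in no great subsphere, so `P` has interior points, and `T` is the
closure of its relative interior. Since open sets of the sphere have positive measure and `C` is
closed, `T = C`; that is, the cone over `C` is `P`. Vectors of `P` have nonnegative inner products,
hence every interior point of `P` is the pole of an open hemisphere containing `C`.
-/

open MeasureTheory

noncomputable section

/-- A set `C ⊆ S^n` is `D`-maximal: compact, of geodesic diameter at most `D`, and of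
maximal spherical volume among compact sets of diameter at most `D`. -/
def DMaximal (n : ℕ) (D : ℝ) (C : Set (Sph n)) : Prop :=
  IsCompact C ∧ sphDiam C ≤ D ∧
    sphVol n C =
      sSup {v | ∃ X : Set (Sph n), IsCompact X ∧ sphDiam X ≤ D ∧ v = sphVol n X}

/-- `K ⊆ S^n` is spherically convex: it lies in an open hemisphere and the cone
`{t • x : t ≥ 0, x ∈ K}` is convex in `ℝ^{n+1}`. -/
def SphConvex {n : ℕ} (K : Set (Sph n)) : Prop :=
  (∃ w : Esp n, w ≠ 0 ∧ ∀ x ∈ K, 0 < inner (𝕜 := ℝ) (x : Esp n) w) ∧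
    Convex ℝ {p : Esp n | ∃ t : ℝ, 0 ≤ t ∧ ∃ x ∈ K, p = t • (x : Esp n)}

open Metric Set Filter Module
open scoped Pointwise RealInnerProductSpace Topology

/-! ### Hausdorff measure under maps that are Lipschitz and open at a point -/

section HausdorffMeasure

variable {X Y : Type*} [EMetricSpace X] [MeasurableSpace X] [BorelSpace X]
  [EMetricSpace Y] [MeasurableSpace Y] [BorelSpace Y]
  {f : X → Y} {x : X} {K : NNReal} {s : Set X} {d : ℝ}

lemma hausdorffMeasure_pos_of_lipschitzOnWith [(μH[d] : Measure Y).IsOpenPosMeasure]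
    (hopen : 𝓝 (f x) ≤ map f (𝓝 x)) (hs : s ∈ 𝓝 x) (hf : LipschitzOnWith K f s) (hd : 0 ≤ d)
    {U : Set X} (hU : U ∈ 𝓝 x) : 0 < μH[d] U := by
  have himage : f '' (s ∩ U) ∈ 𝓝 (f x) := hopen (image_mem_map (inter_mem hs hU))
  have hle : μH[d] (f '' (s ∩ U)) ≤ K ^ d * μH[d] U :=
    ((hf.mono inter_subset_left).hausdorffMeasure_image_le hd).trans
      (mul_le_mul_right (measure_mono inter_subset_right) _)
  exact pos_of_mul_pos_right ((Measure.measure_pos_of_mem_nhds _ himage).trans_le hle) zero_le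

lemma finiteAtFilter_hausdorffMeasure_of_lipschitzOnWith
    [IsLocallyFiniteMeasure (μH[d] : Measure X)]
    (hopen : 𝓝 (f x) ≤ map f (𝓝 x)) (hs : s ∈ 𝓝 x) (hf : LipschitzOnWith K f s) (hd : 0 ≤ d) :
    (μH[d] : Measure Y).FiniteAtFilter (𝓝 (f x)) := by
  obtain ⟨t, ht, htfin⟩ := (μH[d] : Measure X).finiteAt_nhds x
  refine ⟨f '' (s ∩ t), hopen (image_mem_map (inter_mem hs ht)), ?_⟩
  calc μH[d] (f '' (s ∩ t)) ≤ K ^ d * μH[d] (s ∩ t) :=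
        (hf.mono inter_subset_left).hausdorffMeasure_image_le hd
    _ < ⊤ := ENNReal.mul_lt_top (ENNReal.rpow_lt_top_of_nonneg hd ENNReal.coe_ne_top)
        ((measure_mono inter_subset_right).trans_lt htfin)

end HausdorffMeasure

variable {E : Type*} [NormedAddCommGroup E] [InnerProductSpace ℝ E]

/-! ### Surface measure of the unit sphere -/

section Stereographic

variable {v : E}

lemma exists_lipschitzOnWith_stereographic (hv : ‖v‖ = 1) {x : sphere (0 : E) 1}
    (hx : x ∈ (stereographic hv).source) :
    ∃ K, ∃ s ∈ 𝓝 x, LipschitzOnWith K (stereographic hv) s := by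
  have hdom : innerSL ℝ v (x : E) ≠ 1 := by
    rw [stereographic_source, mem_compl_singleton_iff] at hx
    rw [innerSL_apply_apply, ne_eq, inner_eq_one_iff_of_norm_eq_one hv (norm_eq_of_mem_sphere x)]
    exact fun h => hx (Subtype.ext h.symm)
  have hsmooth : ContDiffAt ℝ 1 (stereoToFun v) (x : E) :=
    contDiffOn_stereoToFun.contDiffAt <|
      (isOpen_ne_fun (innerSL ℝ v).continuous continuous_const).mem_nhds hdom
  obtain ⟨K, t, ht, hK⟩ := hsmooth.exists_lipschitzOnWith
  exact ⟨K, (↑) ⁻¹' t, continuous_subtype_val.continuousAt.preimage_mem_nhds ht,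
    fun y hy z hz => hK hy hz⟩

lemma exists_lipschitzOnWith_stereographic_symm (hv : ‖v‖ = 1) (y : (ℝ ∙ v)ᗮ) :
    ∃ K, ∃ s ∈ 𝓝 y, LipschitzOnWith K (stereographic hv).symm s := by
  have hsmooth : ContDiff ℝ 1 (stereoInvFunAux v ∘ ((↑) : (ℝ ∙ v)ᗮ → E)) :=
    contDiff_stereoInvFunAux.comp (ℝ ∙ v)ᗮ.subtypeL.contDiff
  obtain ⟨K, s, hs, hK⟩ := hsmooth.contDiffAt.exists_lipschitzOnWith (x := y)
  exact ⟨K, s, hs, fun y hy z hz => hK hy hz⟩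

lemma mem_source_stereographic_neg (x : sphere (0 : E) 1) :
    x ∈ (stereographic (norm_eq_of_mem_sphere (-x))).source := by
  rw [stereographic_source]
  exact ne_neg_of_mem_unit_sphere ℝ x

end Stereographic

section SurfaceMeasure

variable [MeasurableSpace E] [BorelSpace E] {n : ℕ} [Fact (finrank ℝ E = n + 1)]

lemma isAddHaarMeasure_hausdorffMeasure_orthogonal_span_singleton {v : E} (hv : v ≠ 0) :
    (μH[n] : Measure (ℝ ∙ v)ᗮ).IsAddHaarMeasure := by
  have : FiniteDimensional ℝ E := .of_fact_finrank_eq_succ n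
  have h := isAddHaarMeasure_hausdorffMeasure (E := (ℝ ∙ v)ᗮ)
  rwa [Submodule.finrank_orthogonal_span_singleton (n := n) hv] at h

instance isOpenPosMeasure_hausdorffMeasure_sphere :
    (μH[n] : Measure (sphere (0 : E) 1)).IsOpenPosMeasure where
  open_pos U hU := by
    rintro ⟨x, hx⟩
    have := isAddHaarMeasure_hausdorffMeasure_orthogonal_span_singleton (n := n)
      (ne_zero_of_mem_unit_sphere (-x))
    have hsource := mem_source_stereographic_neg x
    obtain ⟨K, s, hs, hK⟩ := exists_lipschitzOnWith_stereographic _ hsource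
    exact (hausdorffMeasure_pos_of_lipschitzOnWith
      ((stereographic _).map_nhds_eq hsource).ge hs hK n.cast_nonneg (hU.mem_nhds hx)).ne'

instance isFiniteMeasure_hausdorffMeasure_sphere :
    IsFiniteMeasure (μH[n] : Measure (sphere (0 : E) 1)) := by
  have : FiniteDimensional ℝ E := .of_fact_finrank_eq_succ n
  have : IsLocallyFiniteMeasure (μH[n] : Measure (sphere (0 : E) 1)) := ⟨fun x => by
    have := isAddHaarMeasure_hausdorffMeasure_orthogonal_span_singleton (n := n)
      (ne_zero_of_mem_unit_sphere (-x))
    let φ := stereographic (norm_eq_of_mem_sphere (-x))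
    have hsource : x ∈ φ.source := mem_source_stereographic_neg x
    obtain ⟨K, s, hs, hK⟩ := exists_lipschitzOnWith_stereographic_symm
      (norm_eq_of_mem_sphere (-x)) (φ x)
    have hfin := finiteAtFilter_hausdorffMeasure_of_lipschitzOnWith (d := n)
      (φ.symm.map_nhds_eq (φ.map_source hsource)).ge hs hK n.cast_nonneg
    rwa [φ.left_inv hsource] at hfin⟩
  infer_instance

/-- A great subsphere is the unit sphere of the `n`-dimensional space `vᗮ`, where
`n`-dimensional Hausdorff measure is a Haar measure. -/
lemma hausdorffMeasure_sphere_setOf_inner_eq_zero {v : E} (hv : v ≠ 0) :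
    (μH[n] : Measure (sphere (0 : E) 1)) {z | ⟪(z : E), v⟫ = 0} = 0 := by
  have : FiniteDimensional ℝ E := .of_fact_finrank_eq_succ n
  have := isAddHaarMeasure_hausdorffMeasure_orthogonal_span_singleton (n := n) hv
  have hnull : (μH[n] : Measure E) ((↑) '' sphere (0 : (ℝ ∙ v)ᗮ) 1) = 0 := by
    rw [isometry_subtype_coe.hausdorffMeasure_image (.inl n.cast_nonneg)]
    exact Measure.addHaar_sphere_of_ne_zero _ _ one_ne_zero
  rw [← isometry_subtype_coe.hausdorffMeasure_image (.inl n.cast_nonneg)]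
  refine measure_mono_null ?_ hnull
  rintro _ ⟨z, hz, rfl⟩
  exact ⟨⟨z, Submodule.mem_orthogonal_singleton_iff_inner_left.2 hz⟩, by simp, rfl⟩

end SurfaceMeasure

/-! ### Convex cones and the unit sphere -/

section ClosedConicHull

/-- The smallest proper cone containing `s`, i.e. the closed convex cone generated by `s`. -/
def closedConicHull (s : Set E) : ProperCone ℝ E :=
  Submodule.closure (PointedCone.hull ℝ s)

lemma subset_closedConicHull (s : Set E) : s ⊆ closedConicHull s :=
  PointedCone.subset_hull.trans (subset_closure (s := (PointedCone.hull ℝ s : Set E)))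

lemma closedConicHull_le_iff {s : Set E} {P : ProperCone ℝ E} :
    closedConicHull s ≤ P ↔ s ⊆ P :=
  Submodule.closure_le.trans Submodule.span_le

/-- The circular cone of vectors making an angle of at most `arccos c` with `v`. For `v = 0` it
is the whole space. -/
def circularCone {c : ℝ} (hc : 0 ≤ c) (v : E) : ProperCone ℝ E where
  carrier := {x | c * ‖v‖ * ‖x‖ ≤ ⟪v, x⟫}
  zero_mem' := by simp
  add_mem' {x y} hx hy := by
    calc c * ‖v‖ * ‖x + y‖ ≤ c * ‖v‖ * (‖x‖ + ‖y‖) := by gcongr; exact norm_add_le x y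
      _ = c * ‖v‖ * ‖x‖ + c * ‖v‖ * ‖y‖ := mul_add _ _ _
      _ ≤ ⟪v, x⟫ + ⟪v, y⟫ := add_le_add hx hy
      _ = ⟪v, x + y⟫ := (inner_add_right v x y).symm
  smul_mem' t x hx := by
    calc c * ‖v‖ * ‖(t : ℝ) • x‖ = t * (c * ‖v‖ * ‖x‖) := by
          rw [norm_smul, Real.norm_of_nonneg t.2, mul_left_comm]
      _ ≤ t * ⟪v, x⟫ := mul_le_mul_of_nonneg_left hx t.2
      _ = ⟪v, (t : ℝ) • x⟫ := (real_inner_smul_right v x t).symm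
  isClosed' := isClosed_le (by fun_prop) (by fun_prop)

lemma mem_circularCone {c : ℝ} {hc : 0 ≤ c} {v x : E} :
    x ∈ circularCone hc v ↔ c * ‖v‖ * ‖x‖ ≤ ⟪v, x⟫ :=
  .rfl

lemma mem_circularCone_comm {c : ℝ} {hc : 0 ≤ c} {v x : E} :
    x ∈ circularCone hc v ↔ v ∈ circularCone hc x := by
  rw [mem_circularCone, mem_circularCone, real_inner_comm, mul_right_comm]

/-- The bound passes from `s` to its hull in one argument first, and then in the other. -/
lemma mem_circularCone_of_mem_closedConicHull {c : ℝ} {hc : 0 ≤ c} {s : Set E}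
    (hs : ∀ x ∈ s, ∀ y ∈ s, y ∈ circularCone hc x) {x y : E}
    (hx : x ∈ closedConicHull s) (hy : y ∈ closedConicHull s) : y ∈ circularCone hc x := by
  have hleft : ∀ z ∈ s, z ∈ circularCone hc x := fun z hz =>
    mem_circularCone_comm.1 (closedConicHull_le_iff.2 (hs z hz) hx)
  exact closedConicHull_le_iff.2 hleft hy

end ClosedConicHull

section Interior

lemma exists_ne_zero_forall_inner_eq_zero_of_interior_eq_empty [FiniteDimensional ℝ E]
    {s : Set E} (hs : Convex ℝ s) (h0 : 0 ∈ s) (hint : interior s = ∅) :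
    ∃ v : E, v ≠ 0 ∧ ∀ x ∈ s, ⟪x, v⟫ = 0 := by
  have hspan : Submodule.span ℝ s ≠ ⊤ := by
    intro htop
    refine (hs.interior_nonempty_iff_affineSpan_eq_top.2 ?_).ne_empty hint
    refine SetLike.coe_injective ?_
    rw [← insert_eq_of_mem h0, affineSpan_insert_zero, htop, Submodule.top_coe,
      AffineSubspace.top_coe]
  rw [ne_eq, ← Submodule.orthogonal_eq_bot_iff] at hspan
  obtain ⟨v, hv, hv0⟩ := Submodule.exists_mem_ne_zero_of_ne_bot hspan
  exact ⟨v, hv0, fun x hx => hv x (Submodule.subset_span hx)⟩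

lemma inner_pos_of_mem_interior {s : Set E} (hs : ∀ x ∈ s, ∀ y ∈ s, 0 ≤ ⟪x, y⟫) {w x : E}
    (hw : w ∈ interior s) (hx : x ∈ s) (hx0 : x ≠ 0) : 0 < ⟪w, x⟫ := by
  have htendsto : Tendsto (fun t : ℝ => w - t • x) (𝓝[>] 0) (𝓝 w) := by
    have : ContinuousAt (fun t : ℝ => w - t • x) 0 := by fun_prop
    simpa [ContinuousAt] using this.tendsto.mono_left nhdsWithin_le_nhds
  obtain ⟨t, hmem, ht⟩ :=
    ((htendsto.eventually_mem (mem_interior_iff_mem_nhds.1 hw)).and self_mem_nhdsWithin).exists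
  have hnonneg : 0 ≤ ⟪w, x⟫ - t * ‖x‖ ^ 2 := by
    simpa [inner_sub_left, real_inner_smul_left, real_inner_self_eq_norm_sq]
      using hs _ hmem x hx
  have : 0 < t * ‖x‖ ^ 2 := mul_pos ht (by positivity)
  linarith

end Interior

section SphericalTrace

variable (P : ProperCone ℝ E)

lemma smul_mem_interior_of_pos {a : ℝ} (ha : 0 < a) {x : E} (hx : x ∈ interior (P : Set E)) :
    a • x ∈ interior (P : Set E) := by
  have hsub : a • interior (P : Set E) ⊆ P := by
    rintro _ ⟨y, hy, rfl⟩
    exact P.smul_mem (interior_subset hy) ha.le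
  exact interior_maximal hsub (isOpen_interior.smul₀ ha.ne') (smul_mem_smul_set hx)

lemma preimage_sphere_subset_closure_interior (hP : (interior (P : Set E)).Nonempty) :
    ((↑) ⁻¹' (P : Set E) : Set (sphere (0 : E) 1)) ⊆ closure ((↑) ⁻¹' interior (P : Set E)) := by
  intro x hx
  have hx0 : (x : E) ≠ 0 := ne_zero_of_mem_unit_sphere x
  have hclosure : (x : E) ∈ closure ({0}ᶜ ∩ interior (P : Set E)) :=
    isOpen_compl_singleton.inter_closure ⟨hx0, by
      rw [P.convex.closure_interior_eq_closure_of_nonempty_interior hP]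
      exact subset_closure hx⟩
  have hnormalize : ContinuousAt (fun p : E => ‖p‖⁻¹ • p) x :=
    (continuousAt_id.norm.inv₀ (norm_ne_zero_iff.2 hx0)).smul continuousAt_id
  rw [closure_subtype]
  have hmem := hnormalize.continuousWithinAt.mem_closure hclosure
    (t := (↑) '' ((↑) ⁻¹' interior (P : Set E) : Set (sphere (0 : E) 1))) fun p ⟨hp0, hp⟩ => by
      have hnorm : 0 < ‖p‖ := norm_pos_iff.2 hp0
      exact ⟨⟨‖p‖⁻¹ • p, by simp [norm_smul, hnorm.ne']⟩,
        smul_mem_interior_of_pos P (inv_pos.2 hnorm) hp, rfl⟩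
  simpa using hmem

lemma preimage_sphere_subset_of_measure_diff_eq_zero [MeasurableSpace E]
    (μ : Measure (sphere (0 : E) 1)) [μ.IsOpenPosMeasure] {C : Set (sphere (0 : E) 1)}
    (hC : IsClosed C) (hP : (interior (P : Set E)).Nonempty)
    (hnull : μ ((↑) ⁻¹' (P : Set E) \ C) = 0) : (↑) ⁻¹' (P : Set E) ⊆ C := by
  have hopen : IsOpen ((↑) ⁻¹' interior (P : Set E) \ C) :=
    (isOpen_interior.preimage continuous_subtype_val).sdiff hC
  have hempty : (↑) ⁻¹' interior (P : Set E) \ C = ∅ :=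
    (hopen.measure_eq_zero_iff μ).1 <|
      measure_mono_null (sdiff_subset_sdiff_left (preimage_mono interior_subset)) hnull
  exact (preimage_sphere_subset_closure_interior P hP).trans
    (closure_minimal (sdiff_eq_empty.1 hempty) hC)

lemma setOf_smul_preimage_sphere_eq
    (hP : ((↑) ⁻¹' (P : Set E) : Set (sphere (0 : E) 1)).Nonempty) :
    {p : E | ∃ t : ℝ, 0 ≤ t ∧ ∃ x ∈ ((↑) ⁻¹' (P : Set E) : Set (sphere (0 : E) 1)),
      p = t • (x : E)} = P := by
  ext p
  refine ⟨fun ⟨t, ht, x, hx, h⟩ => h ▸ P.smul_mem hx ht, fun hp => ?_⟩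
  obtain rfl | hp0 := eq_or_ne p 0
  · obtain ⟨x, hx⟩ := hP
    exact ⟨0, le_rfl, x, hx, (zero_smul ℝ _).symm⟩
  · exact ⟨‖p‖, norm_nonneg p, ⟨‖p‖⁻¹ • p, by simp [norm_smul, hp0]⟩,
      P.smul_mem hp (by positivity), (smul_inv_smul₀ (norm_ne_zero_iff.2 hp0) p).symm⟩

end SphericalTrace


/-! ### Sets of bounded geodesic diameter -/

section SphericalDiameter

variable {n : ℕ}

lemma sphDiam_le_iff {D : ℝ} (hD : 0 ≤ D) {X : Set (Sph n)} :
    sphDiam X ≤ D ↔ ∀ x ∈ X, ∀ y ∈ X, gd x y ≤ D := by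
  refine ⟨fun h x hx y hy => ?_, fun h => Real.sSup_le ?_ hD⟩
  · have hbdd : BddAbove {r | ∃ x ∈ X, ∃ y ∈ X, r = gd x y} :=
      ⟨Real.pi, by rintro _ ⟨x, -, y, -, rfl⟩; exact Real.arccos_le_pi _⟩
    exact (le_csSup hbdd ⟨x, hx, y, hy, rfl⟩).trans h
  · rintro _ ⟨x, hx, y, hy, rfl⟩
    exact h x hx y hy

lemma exists_mem_nhds_isCompact_sphDiam_le (z : Sph n) {D : ℝ} (hD : 0 < D) :
    ∃ X ∈ 𝓝 z, IsCompact X ∧ sphDiam X ≤ D := by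
  have hcont : Continuous fun p : Sph n × Sph n => gd p.1 p.2 :=
    Real.continuous_arccos.comp (by fun_prop)
  have hsmall : ∀ᶠ p in 𝓝 z ×ˢ 𝓝 z, gd p.1 p.2 < D := by
    rw [← nhds_prod_eq]
    exact hcont.continuousAt.eventually_lt_const (by simpa [gd] using hD)
  obtain ⟨U, hU, hUD⟩ := (eventually_prod_self_iff (r := fun x y => gd x y < D)).1 hsmall
  obtain ⟨X, hX, hXU, hXcompact⟩ := local_compact_nhds hU
  exact ⟨X, hX, hXcompact,
    (sphDiam_le_iff hD.le).2 fun x hx y hy => (hUD x (hXU hx) y (hXU hy)).le⟩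

lemma gd_le_iff_mem_circularCone {D : ℝ} (hD0 : 0 ≤ D) (hD1 : D ≤ Real.pi)
    (hc : 0 ≤ Real.cos D) {x y : Sph n} :
    gd x y ≤ D ↔ (y : Esp n) ∈ circularCone hc (x : Esp n) := by
  have hinner := abs_le.1 (abs_real_inner_le_norm (x : Esp n) (y : Esp n))
  rw [norm_eq_of_mem_sphere, norm_eq_of_mem_sphere, mul_one] at hinner
  rw [mem_circularCone, norm_eq_of_mem_sphere, norm_eq_of_mem_sphere, mul_one, mul_one, gd,
    ← Real.strictAntiOn_cos.le_iff_ge ⟨hD0, hD1⟩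
      ⟨Real.arccos_nonneg _, Real.arccos_le_pi _⟩, Real.cos_arccos hinner.1 hinner.2]

lemma mem_circularCone_of_mem_closedConicHull_of_sphDiam_le {D : ℝ} (hD0 : 0 ≤ D)
    (hD1 : D ≤ Real.pi) (hc : 0 ≤ Real.cos D) {C : Set (Sph n)} (hC : sphDiam C ≤ D)
    {x y : Esp n} (hx : x ∈ closedConicHull ((↑) '' C : Set (Esp n)))
    (hy : y ∈ closedConicHull ((↑) '' C : Set (Esp n))) : y ∈ circularCone hc x := by
  refine mem_circularCone_of_mem_closedConicHull ?_ hx hy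
  rintro _ ⟨x, hx, rfl⟩ _ ⟨y, hy, rfl⟩
  exact (gd_le_iff_mem_circularCone hD0 hD1 hc).1 ((sphDiam_le_iff hD0).1 hC x hx y hy)

instance (n : ℕ) : Fact (finrank ℝ (Esp n) = n + 1) := ⟨by simp⟩

instance (n : ℕ) : (sphVol n).IsOpenPosMeasure :=
  isOpenPosMeasure_hausdorffMeasure_sphere

instance (n : ℕ) : IsFiniteMeasure (sphVol n) :=
  isFiniteMeasure_hausdorffMeasure_sphere

end SphericalDiameter

section Maximal

variable {n : ℕ} {μ : Measure (Sph n)} {D : ℝ} {C : Set (Sph n)}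

lemma measure_ne_zero_of_maximal [μ.IsOpenPosMeasure] (hD : 0 < D)
    (hmax : ∀ X : Set (Sph n), IsCompact X → sphDiam X ≤ D → μ X ≤ μ C) : μ C ≠ 0 := by
  obtain ⟨z, hz⟩ : (sphere (0 : Esp n) 1).Nonempty := NormedSpace.sphere_nonempty.2 zero_le_one
  obtain ⟨X, hXz, hX, hXD⟩ := exists_mem_nhds_isCompact_sphDiam_le ⟨z, hz⟩ hD
  exact ((Measure.measure_pos_of_mem_nhds μ hXz).trans_le (hmax X hX hXD)).ne'

lemma interior_closedConicHull_nonempty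
    (hμ : ∀ w : Esp n, w ≠ 0 → μ {z | ⟪(z : Esp n), w⟫ = 0} = 0) (hC : μ C ≠ 0) :
    (interior (closedConicHull ((↑) '' C : Set (Esp n)) : Set (Esp n))).Nonempty := by
  by_contra hempty
  obtain ⟨v, hv, hvC⟩ := exists_ne_zero_forall_inner_eq_zero_of_interior_eq_empty
    (ProperCone.convex _) (zero_mem _) (not_nonempty_iff_eq_empty.1 hempty)
  exact hC (measure_mono_null (fun x hx =>
    hvC x (subset_closedConicHull _ (mem_image_of_mem _ hx))) (hμ v hv))

lemma preimage_closedConicHull_eq_of_maximal [IsFiniteMeasure μ] [μ.IsOpenPosMeasure]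
    (hμ : ∀ w : Esp n, w ≠ 0 → μ {z | ⟪(z : Esp n), w⟫ = 0} = 0)
    (hD0 : 0 < D) (hD1 : D ≤ Real.pi) (hcos : 0 ≤ Real.cos D) (hC : IsCompact C)
    (hCD : sphDiam C ≤ D)
    (hmax : ∀ X : Set (Sph n), IsCompact X → sphDiam X ≤ D → μ X ≤ μ C) :
    (↑) ⁻¹' (closedConicHull ((↑) '' C : Set (Esp n)) : Set (Esp n)) = C := by
  set P := closedConicHull ((↑) '' C : Set (Esp n))
  have hCP : C ⊆ (↑) ⁻¹' (P : Set (Esp n)) := image_subset_iff.1 (subset_closedConicHull _)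
  have hcompact : IsCompact ((↑) ⁻¹' (P : Set (Esp n)) : Set (Sph n)) :=
    (P.isClosed.preimage continuous_subtype_val).isCompact
  have hdiam : sphDiam ((↑) ⁻¹' (P : Set (Esp n)) : Set (Sph n)) ≤ D :=
    (sphDiam_le_iff hD0.le).2 fun x hx y hy => (gd_le_iff_mem_circularCone hD0.le hD1 hcos).2 <|
      mem_circularCone_of_mem_closedConicHull_of_sphDiam_le hD0.le hD1 hcos hCD hx hy
  have hnull : μ ((↑) ⁻¹' (P : Set (Esp n)) \ C) = 0 := by
    rw [measure_sdiff hCP hC.measurableSet.nullMeasurableSet (measure_ne_top μ C),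
      tsub_eq_zero_of_le (hmax _ hcompact hdiam)]
  exact (preimage_sphere_subset_of_measure_diff_eq_zero P μ hC.isClosed
    (interior_closedConicHull_nonempty hμ (measure_ne_zero_of_maximal hD0 hmax))
    hnull).antisymm hCP

theorem DMaximal_sphConvex_general [IsFiniteMeasure μ] [μ.IsOpenPosMeasure]
    (hμ : ∀ w : Esp n, w ≠ 0 → μ {z | ⟪(z : Esp n), w⟫ = 0} = 0)
    (hD0 : 0 < D) (hD1 : D ≤ Real.pi / 2) (hC : IsCompact C) (hCD : sphDiam C ≤ D)
    (hmax : ∀ X : Set (Sph n), IsCompact X → sphDiam X ≤ D → μ X ≤ μ C) : SphConvex C := by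
  have hDpi : D ≤ Real.pi := by linarith
  have hcos : 0 ≤ Real.cos D := Real.cos_nonneg_of_mem_Icc ⟨by linarith, hD1⟩
  let P := closedConicHull ((↑) '' C : Set (Esp n))
  have hPC : (↑) ⁻¹' (P : Set (Esp n)) = C :=
    preimage_closedConicHull_eq_of_maximal hμ hD0 hDpi hcos hC hCD hmax
  have hCpos : μ C ≠ 0 := measure_ne_zero_of_maximal hD0 hmax
  have hacute : ∀ x ∈ P, ∀ y ∈ P, 0 ≤ ⟪x, y⟫ := fun x hx y hy =>
    le_trans (by positivity) <| mem_circularCone.1 <|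
      mem_circularCone_of_mem_closedConicHull_of_sphDiam_le hD0.le hDpi hcos hCD hx hy
  obtain ⟨x₀, hx₀⟩ := nonempty_of_measure_ne_zero hCpos
  obtain ⟨w, hw⟩ := interior_closedConicHull_nonempty hμ hCpos
  have hpole : ∀ x ∈ C, 0 < ⟪(x : Esp n), w⟫ := fun x hx => by
    rw [real_inner_comm]
    exact inner_pos_of_mem_interior hacute hw (hPC.ge hx) (ne_zero_of_mem_unit_sphere x)
  refine ⟨⟨w, ?_, hpole⟩, ?_⟩
  · rintro rfl
    simpa using hpole x₀ hx₀
  · rw [← hPC, setOf_smul_preimage_sphere_eq P ⟨x₀, hPC.ge hx₀⟩]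
    exact P.convex

end Maximal

/-- for `0 < D ≤ π/2`, every `D`-maximal set is spherically convex. -/
theorem DMaximal_sphConvex (n : ℕ) (hn : 2 ≤ n) (D : ℝ) (hD0 : 0 < D)
    (hD1 : D ≤ Real.pi / 2) (C : Set (Sph n)) (hC : DMaximal n D C) :
    SphConvex C := by
  exact DMaximal_sphConvex_general (fun _ => hausdorffMeasure_sphere_setOf_inner_eq_zero)
    hD0 hD1 hC.1 hC.2.1 fun X hX hXD => hC.2.2.ge.trans' (le_sSup ⟨X, hX, hXD, rfl⟩)
end
end
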